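/- Let θ ∈ (0, π), s ≥ 0 and x ∈ ℂ. Set μ_L := cos(x)/√(sin θ), μ_R := cos(x+θ)/√(sin θ) and a := √(2/sin θ), where cos is the complex cosine and the square roots are the positive real square roots (note sin θ > 0). Let P := (gaussianReal 0 1).prod (gaussianReal 0 1) be the law of a pair (z₁, z₂) of independent standard real Gaussians. Then the complex-valued integral ∫ exp(−s − μ_L·(a·√s·z₁) − μ_R·(a·√s·(−cos(θ)·z₁ + sin(θ)·z₂))) dP(z₁,z₂) equals 1. -/

import Mathlib

open MeasureTheory ProbabilityTheory

/-- Fixed-time content of the martingale Lemma 7.1: with `θ ∈ (0,π)`, `s ≥ 0`,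
`μ_L = cos x / √(sin θ)`, `μ_R = cos (x+θ) / √(sin θ)`, `a = √(2 / sin θ)`, and
`(z₁, z₂)` a pair of independent standard Gaussians,
`E[exp(−s − μ_L·(a√s z₁) − μ_R·(a√s(−cos θ · z₁ + sin θ · z₂)))] = 1`. -/
theorem exp_martingale_fixed_time (θ s : ℝ) (hθ0 : 0 < θ) (hθπ : θ < Real.pi)
    (hs : 0 ≤ s) (x : ℂ) (μL μR : ℂ) (a : ℝ)
    (hμL : μL = Complex.cos x / (Real.sqrt (Real.sin θ) : ℂ))
    (hμR : μR = Complex.cos (x + (θ : ℂ)) / (Real.sqrt (Real.sin θ) : ℂ))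
    (ha : a = Real.sqrt (2 / Real.sin θ)) :
    ∫ p : ℝ × ℝ,
        Complex.exp (-(s : ℂ) - μL * ((a * Real.sqrt s * p.1 : ℝ) : ℂ)
          - μR * ((a * Real.sqrt s * (-(Real.cos θ) * p.1 + Real.sin θ * p.2) : ℝ) : ℂ))
        ∂((gaussianReal 0 1).prod (gaussianReal 0 1)) = 1 := by
  have hsin : 0 < Real.sin θ := Real.sin_pos_of_pos_of_lt_pi hθ0 hθπ
  have hS0 : (Real.sin θ : ℂ) ≠ 0 := by exact_mod_cast hsin.ne'
  have hg : ∀ z : ℂ, ∫ y : ℝ, Complex.exp (z * (y : ℂ)) ∂(gaussianReal 0 1)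
      = Complex.exp (z ^ 2 / 2) := by
    intro z
    have h := complexMGF_id_gaussianReal (μ := 0) (v := 1) z
    simpa [complexMGF] using h
  have ha2 : (a : ℂ) ^ 2 * (Real.sin θ : ℂ) = 2 := by
    have h : a ^ 2 * Real.sin θ = 2 := by
      rw [ha, Real.sq_sqrt (by positivity)]
      field_simp
    exact_mod_cast h
  have hs2 : (Real.sqrt s : ℂ) ^ 2 = (s : ℂ) := by
    exact_mod_cast Real.sq_sqrt hs
  have hr2 : (Real.sqrt (Real.sin θ) : ℂ) ^ 2 = (Real.sin θ : ℂ) := by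
    exact_mod_cast Real.sq_sqrt hsin.le
  have hr0 : (Real.sqrt (Real.sin θ) : ℂ) ≠ 0 := by
    exact_mod_cast (Real.sqrt_pos.mpr hsin).ne'
  have hcs : (Real.sin θ : ℂ) ^ 2 + (Real.cos θ : ℂ) ^ 2 = 1 := by
    exact_mod_cast Real.sin_sq_add_cos_sq θ
  have hx := Complex.sin_sq_add_cos_sq x
  have hquad : μL ^ 2 - 2 * μL * μR * (Real.cos θ : ℂ) + μR ^ 2 = (Real.sin θ : ℂ) := by
    have hL : μL * (Real.sqrt (Real.sin θ) : ℂ) = Complex.cos x := by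
      rw [hμL]; field_simp
    have hR : μR * (Real.sqrt (Real.sin θ) : ℂ) =
        Complex.cos x * (Real.cos θ : ℂ) - Complex.sin x * (Real.sin θ : ℂ) := by
      rw [hμR, Complex.cos_add, Complex.ofReal_cos, Complex.ofReal_sin]; field_simp
    apply mul_right_cancel₀ hS0
    have e : (μL ^ 2 - 2 * μL * μR * (Real.cos θ : ℂ) + μR ^ 2) * (Real.sin θ : ℂ)
        = (μL * (Real.sqrt (Real.sin θ) : ℂ)) ^ 2
          - 2 * (μL * (Real.sqrt (Real.sin θ) : ℂ)) * (μR * (Real.sqrt (Real.sin θ) : ℂ))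
            * (Real.cos θ : ℂ) + (μR * (Real.sqrt (Real.sin θ) : ℂ)) ^ 2 := by
      rw [← hr2]; ring
    rw [e, hL, hR]
    linear_combination (Real.sin θ : ℂ) ^ 2 * hx - Complex.cos x ^ 2 * hcs
  have hsplit : ∀ p : ℝ × ℝ,
      Complex.exp (-(s : ℂ) - μL * ((a * Real.sqrt s * p.1 : ℝ) : ℂ)
          - μR * ((a * Real.sqrt s * (-(Real.cos θ) * p.1 + Real.sin θ * p.2) : ℝ) : ℂ))
      = (Complex.exp (-(s : ℂ)) *
          Complex.exp ((-(a : ℂ) * (Real.sqrt s : ℂ) * (μL - μR * (Real.cos θ : ℂ))) * (p.1 : ℂ)))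
        * Complex.exp ((-(a : ℂ) * (Real.sqrt s : ℂ) * (μR * (Real.sin θ : ℂ))) * (p.2 : ℂ)) := by
    intro p
    rw [← Complex.exp_add, ← Complex.exp_add]
    congr 1
    simp only [Complex.ofReal_mul, Complex.ofReal_add, Complex.ofReal_neg]
    ring
  simp_rw [hsplit]
  rw [integral_prod_mul
    (fun y : ℝ => Complex.exp (-(s : ℂ)) *
      Complex.exp ((-(a : ℂ) * (Real.sqrt s : ℂ) * (μL - μR * (Real.cos θ : ℂ))) * (y : ℂ)))
    (fun y : ℝ =>
      Complex.exp ((-(a : ℂ) * (Real.sqrt s : ℂ) * (μR * (Real.sin θ : ℂ))) * (y : ℂ))),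
    integral_const_mul, hg, hg, ← Complex.exp_add, ← Complex.exp_add, ← Complex.exp_zero]
  congr 1
  have h1 : (-(a : ℂ) * (Real.sqrt s : ℂ) * (μL - μR * (Real.cos θ : ℂ))) ^ 2
      + (-(a : ℂ) * (Real.sqrt s : ℂ) * (μR * (Real.sin θ : ℂ))) ^ 2
      = (a : ℂ) ^ 2 * (Real.sqrt s : ℂ) ^ 2 * (Real.sin θ : ℂ) := by
    rw [← hquad]
    have h2 : (Real.sin θ : ℂ) ^ 2 = 1 - (Real.cos θ : ℂ) ^ 2 := by linear_combination hcs
    rw [hquad]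
    linear_combination (a : ℂ) ^ 2 * (Real.sqrt s : ℂ) ^ 2 * (hquad + μR ^ 2 * h2)
  rw [hs2] at h1
  linear_combination h1 / 2 + (s : ℂ) / 2 * ha2
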